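/- Let n ≥ 1. Assume a transform 𝒯 : GX_ℂ → GX_ℂ satisfies: (1) 𝒯(𝒯(Φ)) = Φ for every Φ ∈ GX_ℂ; (2) for every Φ ∈ GX_ℂ, 𝒯(Φ) = Φ if Φ ∈ GY_ℂ and 𝒯(Φ) ≠ Φ if Φ ∉ GY_ℂ; and (3) there exists a holomorphic map F : ℂ^{2n+1} → ℂ^{2n+1} such that 𝒯(Φ) = F ∘ Φ for every Φ ∈ GX_ℂ. Then 𝒯 is the complex Legendre involution, i.e. 𝒯(θ, a, b) = (b, Σᵢ₌₁ⁿ bᵢθᵢ − a, θ) for every (θ, a, b) ∈ GX_ℂ. -/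

import Mathlib

open scoped BigOperators

/-- Triples `(θ, a, b)` encoding maps `ℂⁿ → ℂ^{2n+1}`. -/
abbrev CTripleMap (n : ℕ) :=
  ((Fin n → ℂ) → Fin n → ℂ) × ((Fin n → ℂ) → ℂ) × ((Fin n → ℂ) → Fin n → ℂ)

/-- All three components are holomorphic (entire). -/
def HolTriple (n : ℕ) (Φ : CTripleMap n) : Prop :=
  Differentiable ℂ Φ.1 ∧ Differentiable ℂ Φ.2.1 ∧ Differentiable ℂ Φ.2.2

/-- The creative condition (*): `da = ∑ᵢ bᵢ dθᵢ` (complex derivatives). -/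
def CCreative (n : ℕ) (Φ : CTripleMap n) : Prop :=
  ∀ x v : Fin n → ℂ,
    fderiv ℂ Φ.2.1 x v = ∑ i, Φ.2.2 x i * fderiv ℂ (fun y => Φ.1 y i) x v

/-- The set of points where the complex differential of `f : ℂⁿ → ℂⁿ` is invertible. -/
def CRegPts (n : ℕ) (f : (Fin n → ℂ) → Fin n → ℂ) : Set (Fin n → ℂ) :=
  {x | Function.Bijective (fderiv ℂ f x)}

/-- `GX_ℂ`: holomorphic triples satisfying (*) with `Reg θ` and `Reg b` dense. -/
def CGXset (n : ℕ) : Set (CTripleMap n) :=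
  {Φ | HolTriple n Φ ∧ CCreative n Φ ∧ Dense (CRegPts n Φ.1) ∧ Dense (CRegPts n Φ.2.2)}

/-- `GY_ℂ`: triples of the form `(θ, ½∑θᵢ², θ)` with `θ` holomorphic and `Reg θ` dense. -/
def CGYset (n : ℕ) : Set (CTripleMap n) :=
  {Φ | ∃ θ : (Fin n → ℂ) → Fin n → ℂ, Differentiable ℂ θ ∧ Dense (CRegPts n θ) ∧
    Φ = (θ, fun x => (1 / 2 : ℂ) * ∑ i, θ x i ^ 2, θ)}

/-- The complex Legendre involution `L_ℂ(θ, a, b) = (b, ∑ᵢ bᵢθᵢ − a, θ)`. -/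
noncomputable def CLegendre (n : ℕ) (Φ : CTripleMap n) : CTripleMap n :=
  (Φ.2.2, fun x => (∑ i, Φ.2.2 x i * Φ.1 x i) - Φ.2.1 x, Φ.1)

/-- Packing a triple `(θ, a, b)` into a single map `ℂⁿ → ℂ^{2n+1}`. -/
def cPackTriple (n : ℕ) (Φ : CTripleMap n) : (Fin n → ℂ) → (Fin n → ℂ) × ℂ × (Fin n → ℂ) :=
  fun x => (Φ.1 x, Φ.2.1 x, Φ.2.2 x)

/-!
Every point `p` of the one-jet space lies on the Legendrian planes of slopes `1` and `2`, which
belong to `GX_ℂ` and together span the contact hyperplane at `p`; since `F` maps them to Legendrian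
maps, it is a contact map, and it is an involution because these planes cover the space.

A contact vector with two nonzero components lies in the graph of an invertible symmetric matrix.
The plane `F` maps to this graph belongs to `GX_ℂ`, so the preimage of such a vector under the
differential of `F` also has two nonzero components. Hence the differential sends a horizontal
vector `(u, 0)` or a vertical vector `(0, v)` to a vector which is horizontal or vertical, and by
the identity theorem `F` either preserves or exchanges the two Legendrian foliations, whose leaves
are the fibres of `(b, b · θ - a)` and of `(θ, a)`.

If `F` preserves them, it acts on the points `(θ, a)` and on the affine hyperplanes
`a = b · θ - c`, compatibly with incidence. It fixes the points of the paraboloid `a = ½ θ · θ`,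
hence the generic hyperplane, which is determined by its intersection with the paraboloid, and so
`F` is the identity. If `F` exchanges the foliations, this applies to its composition with the
Legendre involution, which also fixes the jets of the paraboloid.
-/

section Holomorphic

open Metric Filter Topology Interval

variable {E G : Type*} [NormedAddCommGroup E] [NormedSpace ℂ E]
  [NormedAddCommGroup G] [NormedSpace ℂ G]

theorem norm_fderiv_le_of_forall_mem_ball_norm_le {f : E → G} {c : E} {R M : ℝ}
    (hf : DifferentiableOn ℂ f (ball c R)) (hR : 0 < R) (hM : ∀ z ∈ ball c R, ‖f z‖ ≤ M) :
    ‖fderiv ℂ f c‖ ≤ 2 * M / R := by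
  refine Complex.norm_fderiv_le_div_of_mapsTo_ball hf (fun z hz => ?_) hR
  rw [mem_closedBall, dist_eq_norm, two_mul]
  exact norm_sub_le_of_le (hM z hz) (hM c (mem_ball_self hR))

theorem continuous_fderiv_of_differentiable [FiniteDimensional ℂ E] {f : E → G}
    (hf : Differentiable ℂ f) : Continuous (fderiv ℂ f) := by
  have : ProperSpace E := FiniteDimensional.proper ℂ E
  rw [continuous_iff_continuousAt]
  intro x
  rw [ContinuousAt, tendsto_iff_norm_sub_tendsto_zero, Metric.tendsto_nhds]
  intro ε hε
  have hcont : Continuous fun q : E × E => ‖f (q.1 + q.2) - f (x + q.2)‖ := by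
    have := hf.continuous
    fun_prop
  have hclose : ∀ᶠ y in 𝓝 x, ∀ z ∈ closedBall (0 : E) 1, ‖f (y + z) - f (x + z)‖ < ε / 4 :=
    (isCompact_closedBall _ _).eventually_forall_of_forall_eventually fun z _ =>
      hcont.continuousAt.eventually (gt_mem_nhds (by simpa using by positivity))
  filter_upwards [hclose] with y hy
  have hd : ∀ c : E, Differentiable ℂ fun z => f (c + z) := fun c =>
    hf.comp (differentiable_id.const_add c)
  have hbound := norm_fderiv_le_of_forall_mem_ball_norm_le (c := 0)
    ((hd y).sub (hd x)).differentiableOn one_pos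
    fun z hz => (hy z (ball_subset_closedBall hz)).le
  rw [fderiv_sub (hd y 0) (hd x 0), fderiv_comp_add_left, fderiv_comp_add_left, add_zero,
    add_zero] at hbound
  rw [Real.dist_0_eq_abs, abs_norm]
  linarith

theorem differentiable_intervalIntegral_smul_comp_add [FiniteDimensional ℂ E] {f : E → G}
    (hf : Differentiable ℂ f) {k : ℝ → ℂ} (hk : Continuous k) {γ : ℝ → E} (hγ : Continuous γ)
    (a b : ℝ) : Differentiable ℂ fun x => ∫ t in a..b, k t • f (x + γ t) := by
  have : ProperSpace E := FiniteDimensional.proper ℂ E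
  intro x₀
  have hf' := continuous_fderiv_of_differentiable hf
  have hf₀ := hf.continuous
  obtain ⟨C, hC⟩ := ((isCompact_closedBall x₀ 1).prod (isCompact_uIcc (a := a) (b := b))
    ).exists_bound_of_continuousOn (f := fun q : E × ℝ => k q.2 • fderiv ℂ f (q.1 + γ q.2))
    (by fun_prop)
  refine (intervalIntegral.hasFDerivAt_integral_of_dominated_of_fderiv_le (𝕜 := ℂ)
    (F' := fun x t => k t • fderiv ℂ f (x + γ t)) (bound := fun _ => C)
    (closedBall_mem_nhds x₀ one_pos) ?meas ?int ?meas' ?bound intervalIntegrable_const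
    ?deriv).differentiableAt
  case meas =>
    exact .of_forall fun x => Continuous.aestronglyMeasurable (by fun_prop)
  case int => exact Continuous.intervalIntegrable (by fun_prop) _ _
  case meas' => exact Continuous.aestronglyMeasurable (by fun_prop)
  case bound => exact .of_forall fun t ht x hx => hC (x, t) ⟨hx, Set.uIoc_subset_uIcc ht⟩
  case deriv =>
    exact .of_forall fun t _ x _ =>
      ((hf _).hasFDerivAt.comp x ((hasFDerivAt_id x).add_const _)).const_smul (k t)

theorem differentiable_fderiv_apply [FiniteDimensional ℂ E] [CompleteSpace G] {f : E → G}
    (hf : Differentiable ℂ f) (w : E) : Differentiable ℂ fun x => fderiv ℂ f x w := by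
  have hderiv : ∀ x, HasDerivAt (fun z : ℂ => f (x + z • w)) (fderiv ℂ f x w) 0 := fun x => by
    have hline : HasDerivAt (fun z : ℂ => x + z • w) w 0 := by
      simpa using ((hasDerivAt_id (0 : ℂ)).smul_const w).const_add x
    exact HasFDerivAt.comp_hasDerivAt_of_eq (0 : ℂ) (hf x).hasFDerivAt hline (by simp)
  have cauchy : ∀ x, fderiv ℂ f x w = (2 * Real.pi * Complex.I)⁻¹ •
      ∮ z in C(0, 1), (1 / (z - 0) ^ 2) • f (x + z • w) := fun x => by
    have hline : Differentiable ℂ fun z : ℂ => f (x + z • w) :=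
      hf.comp ((differentiable_id.smul_const w).const_add x)
    rw [hline.differentiableOn.deriv_eq_smul_circleIntegral one_pos,
      inv_smul_smul₀ Complex.two_pi_I_ne_zero, (hderiv x).deriv]
  simp_rw [cauchy, circleIntegral, smul_smul]
  refine (differentiable_intervalIntegral_smul_comp_add hf ?_ (by fun_prop) _ _).const_smul _
  have hne : ∀ t, circleMap 0 1 t ≠ 0 := fun t => circleMap_ne_center one_ne_zero
  simp only [deriv_circleMap, sub_zero]
  exact ((continuous_circleMap 0 1).mul continuous_const).mul
    (continuous_const.div ((continuous_circleMap 0 1).pow 2) fun t => pow_ne_zero 2 (hne t))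

theorem differentiable_fderiv_of_differentiable [FiniteDimensional ℂ E] [CompleteSpace G]
    {f : E → G} (hf : Differentiable ℂ f) : Differentiable ℂ (fderiv ℂ f) := by
  let e := (Module.finBasis ℂ E).equivFunL
  let e' := (e.arrowCongr (1 : G ≃L[ℂ] G)).trans (ContinuousLinearEquiv.piRing (Fin _))
  rw [← e'.comp_differentiable_iff, differentiable_pi]
  exact fun i => differentiable_fderiv_apply hf (e.symm (Pi.single i 1))

theorem dense_setOf_ne_zero [CompleteSpace G] {f : E → G} (hf : Differentiable ℂ f) {p : E}
    (hp : f p ≠ 0) : Dense {x | f x ≠ 0} := by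
  intro x
  by_contra hx
  have hline : Differentiable ℂ fun t : ℂ => f (x + t • (p - x)) :=
    hf.comp ((differentiable_id.smul_const _).const_add x)
  have hzero : ∀ᶠ y in 𝓝 x, f y = 0 := by
    simpa [mem_closure_iff_frequently] using hx
  have hev : (fun t : ℂ => f (x + t • (p - x))) =ᶠ[𝓝 0] fun _ => 0 := by
    have hc : ContinuousAt (fun t : ℂ => x + t • (p - x)) 0 := by fun_prop
    exact hc.eventually (by simpa using hzero)
  have h := AnalyticOnNhd.eq_of_eventuallyEq (fun z _ => hline.analyticAt z)
    (analyticOnNhd_const (v := (0 : G))) hev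
  exact hp (by simpa using congrFun h 1)

theorem forall_eq_zero_or_forall_eq_zero {G' : Type*} [TopologicalSpace G'] [T2Space G'] [Zero G']
    [CompleteSpace G] {f : E → G} {g : E → G'} (hf : Differentiable ℂ f) (hg : Continuous g)
    (h : ∀ x, f x = 0 ∨ g x = 0) : (∀ x, f x = 0) ∨ ∀ x, g x = 0 := by
  by_contra! hne
  obtain ⟨⟨p, hp⟩, q, hq⟩ := hne
  exact hq <| congrFun (hg.ext_on (dense_setOf_ne_zero hf hp) continuous_const
    fun x hx => (h x).resolve_left hx) q

end Holomorphic

section Algebra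

open Matrix

variable {ι K : Type*} [Fintype ι] [Field K]

theorem exists_dotProduct_eq_zero_and_ne_zero {x z : ι → K} (hx : x ≠ 0)
    (hz : ∀ c : K, z ≠ c • x) : ∃ m : ι → K, m ⬝ᵥ x = 0 ∧ m ⬝ᵥ z ≠ 0 := by
  classical
  obtain ⟨j, hj⟩ := Function.ne_iff.1 hx
  obtain ⟨i, hi⟩ := Function.ne_iff.1 (hz (z j / x j))
  refine ⟨Pi.single i (x j) - Pi.single j (x i), ?_, fun h => hi ?_⟩
  · simp only [sub_dotProduct, single_dotProduct]
    ring
  · simp only [sub_dotProduct, single_dotProduct, Pi.smul_apply, smul_eq_mul] at h ⊢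
    simp only [Pi.zero_apply] at hj
    field_simp
    linear_combination h

theorem isSymm_dotProduct_mulVec_comm {R : Type*} [CommSemiring R] {M : Matrix ι ι R}
    (hM : M.IsSymm) (x y : ι → R) : x ⬝ᵥ (M *ᵥ y) = (M *ᵥ x) ⬝ᵥ y := by
  rw [dotProduct_mulVec, ← mulVec_transpose, hM.eq]

theorem exists_isSymm_mulVec_eq {x : ι → K} (hx : x ≠ 0) (y : ι → K) :
    ∃ M : Matrix ι ι K, M.IsSymm ∧ M *ᵥ x = y := by
  classical
  obtain ⟨j, hj⟩ := Function.ne_iff.1 hx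
  let k : ι → K := Pi.single j (x j)⁻¹
  have hk : k ⬝ᵥ x = 1 := by simpa [k] using inv_mul_cancel₀ hj
  refine ⟨vecMulVec y k + vecMulVec k y - (y ⬝ᵥ x) • vecMulVec k k, ?_, ?_⟩
  · simp [Matrix.IsSymm, transpose_vecMulVec, add_comm]
  · simp [sub_mulVec, add_mulVec, smul_mulVec, vecMulVec_mulVec, hk]

theorem exists_isSymm_injective_mulVec_eq {x y : ι → K} (hx : x ≠ 0) (hy : y ≠ 0) :
    ∃ M : Matrix ι ι K, M.IsSymm ∧ Function.Injective M.mulVec ∧ M *ᵥ x = y := by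
  obtain ⟨M, ⟨hM, hMx⟩, hmin⟩ := exists_minimalFor_of_wellFoundedLT
    (fun M : Matrix ι ι K => M.IsSymm ∧ M *ᵥ x = y) (fun M => LinearMap.ker M.mulVecLin)
    (exists_isSymm_mulVec_eq hx y)
  refine ⟨M, hM, ?_, hMx⟩
  -- If `M z = 0` and `m` kills `x` but not `z`, adding `m mᵀ` to `M` shrinks the kernel.
  by_contra hinj
  obtain ⟨z, hz, hz0⟩ : ∃ z, M *ᵥ z = 0 ∧ z ≠ 0 := by
    have h := mt (injective_iff_map_eq_zero M.mulVecLin).2 hinj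
    push Not at h
    exact h
  obtain ⟨m, hmx, hmz⟩ := exists_dotProduct_eq_zero_and_ne_zero hx (z := z) (by
    rintro c rfl
    rw [mulVec_smul, hMx, smul_eq_zero_iff_left hy] at hz
    exact hz0 (by rw [hz, zero_smul]))
  have hmul : ∀ v, (M + vecMulVec m m) *ᵥ v = M *ᵥ v + (m ⬝ᵥ v) • m := fun v => by
    simp [add_mulVec, vecMulVec_mulVec]
  have hker : ∀ v, (M + vecMulVec m m) *ᵥ v = 0 → m ⬝ᵥ v = 0 := fun v hv => by
    have h := congrArg (z ⬝ᵥ ·) hv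
    simp only [hmul, dotProduct_add, dotProduct_smul, isSymm_dotProduct_mulVec_comm hM, hz,
      zero_dotProduct, zero_add, dotProduct_zero, smul_eq_mul, dotProduct_comm z m] at h
    exact (mul_eq_zero.1 h).resolve_right hmz
  have hle : LinearMap.ker (M + vecMulVec m m).mulVecLin ≤ LinearMap.ker M.mulVecLin :=
    fun v hv => by
      have h : M *ᵥ v + (m ⬝ᵥ v) • m = 0 := (hmul v).symm.trans hv
      rw [hker v hv, zero_smul, add_zero] at h
      exact h
  have hz' := hmin ⟨hM.add (transpose_vecMulVec m m), by rw [hmul, hMx, hmx]; simp⟩ hle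
    (x := z) hz
  exact hmz (hker z hz')

theorem eq_of_forall_quadric [IsAlgClosed K] [NeZero (2 : K)] [Nonempty ι] {b B : ι → K} {c C : K}
    (hbc : b ⬝ᵥ b - 2 * c ≠ 0)
    (h : ∀ θ, θ ⬝ᵥ θ = 2 * (b ⬝ᵥ θ - c) → B ⬝ᵥ θ - C = b ⬝ᵥ θ - c) : B = b ∧ C = c := by
  classical
  have h2 : (2 : K) ≠ 0 := NeZero.ne _
  -- The points `b ± ρ eᵢ` lie on the quadric.
  obtain ⟨ρ, hρ⟩ := IsAlgClosed.exists_pow_nat_eq (b ⬝ᵥ b - 2 * c) two_pos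
  have hρ0 : ρ ≠ 0 := fun h0 => hbc (by rw [← hρ, h0]; ring)
  have hpoint : ∀ i t, t ^ 2 = ρ ^ 2 → (B ⬝ᵥ b - b ⬝ᵥ b) + t * (B i - b i) = C - c := by
    intro i t ht
    have hθ := h (b + Pi.single i t) (by
      simp only [dotProduct_add, add_dotProduct, dotProduct_single, single_dotProduct,
        Pi.add_apply, Pi.single_eq_same]
      linear_combination ht + hρ)
    simp only [dotProduct_add, dotProduct_single] at hθ
    linear_combination hθ
  have hB : B = b := by
    ext i
    have hi : 2 * ρ * (B i - b i) = 0 := by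
      linear_combination hpoint i ρ rfl - hpoint i (-ρ) (by ring)
    exact sub_eq_zero.1 ((mul_eq_zero.1 hi).resolve_left (mul_ne_zero h2 hρ0))
  subst hB
  exact ⟨rfl, by linear_combination -hpoint (Classical.arbitrary _) ρ rfl⟩

end Algebra

section Calculus

open Matrix

variable {𝕜 E ι : Type*} [NontriviallyNormedField 𝕜] [NormedAddCommGroup E] [NormedSpace 𝕜 E]
  [Fintype ι]

@[fun_prop]
theorem differentiable_dotProduct {f g : E → ι → 𝕜} (hf : Differentiable 𝕜 f)
    (hg : Differentiable 𝕜 g) : Differentiable 𝕜 fun x => f x ⬝ᵥ g x := by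
  simp only [dotProduct]
  fun_prop

theorem fderiv_dotProduct_apply {f g : E → ι → 𝕜} {x : E} (hf : DifferentiableAt 𝕜 f x)
    (hg : DifferentiableAt 𝕜 g x) (v : E) :
    fderiv 𝕜 (fun x => f x ⬝ᵥ g x) x v = f x ⬝ᵥ fderiv 𝕜 g x v + fderiv 𝕜 f x v ⬝ᵥ g x := by
  have h : HasFDerivAt (fun x => f x ⬝ᵥ g x) _ x := HasFDerivAt.fun_sum fun i _ =>
    (hasFDerivAt_pi'.1 hf.hasFDerivAt i).mul (hasFDerivAt_pi'.1 hg.hasFDerivAt i)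
  rw [h.fderiv]
  simp [dotProduct, Finset.sum_add_distrib, mul_comm]

theorem differentiable_det [DecidableEq ι] {M : E → Matrix ι ι 𝕜}
    (hM : ∀ i j, Differentiable 𝕜 fun x => M x i j) : Differentiable 𝕜 fun x => (M x).det := by
  simp only [det_apply]
  refine Differentiable.fun_sum fun σ _ => Differentiable.const_smul (fun x => ?_) _
  exact (HasFDerivAt.finsetProd fun i _ => (hM (σ i) i x).hasFDerivAt).differentiableAt

end Calculus

section ContactGeometry

open Matrix

variable {n : ℕ} {E : Type*} [NormedAddCommGroup E] [NormedSpace ℂ E]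

/-- The space of one-jets `(θ, a, b)`, with the contact structure `da = b · dθ`. -/
abbrev JetSpace (n : ℕ) := (Fin n → ℂ) × ℂ × (Fin n → ℂ)

/-- The parametrization `(u, v) ↦ (u, b · u, v)` of the contact hyperplane at the points
`(θ, a, b)`. -/
noncomputable def contactLift (b : Fin n → ℂ) : (Fin n → ℂ) × (Fin n → ℂ) →L[ℂ] JetSpace n where
  toFun x := (x.1, b ⬝ᵥ x.1, x.2)
  map_add' x y := by simp
  map_smul' c x := by simp
  cont := by fun_prop

/-- The projection `(u, s, v) ↦ (u, v)`, which inverts `contactLift` on contact hyperplanes. -/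
noncomputable def forgetValue : JetSpace n →L[ℂ] (Fin n → ℂ) × (Fin n → ℂ) :=
  (ContinuousLinearMap.fst ℂ _ _).prod (ContinuousLinearMap.snd ℂ _ _ ∘L
    ContinuousLinearMap.snd ℂ _ _)

@[simp]
theorem contactLift_apply (b : Fin n → ℂ) (x : (Fin n → ℂ) × (Fin n → ℂ)) :
    contactLift b x = (x.1, b ⬝ᵥ x.1, x.2) := rfl

@[simp]
theorem forgetValue_apply (x : JetSpace n) : forgetValue x = (x.1, x.2.2) := rfl

theorem forgetValue_contactLift (b : Fin n → ℂ) (x : (Fin n → ℂ) × (Fin n → ℂ)) :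
    forgetValue (contactLift b x) = x := rfl

/-- A linear map into the contact hyperplane is isotropic if the symplectic form
`dθ ∧ db` vanishes on its image. -/
def IsIsotropic (L : E →L[ℂ] (Fin n → ℂ) × (Fin n → ℂ)) : Prop :=
  ∀ v w, (L v).1 ⬝ᵥ (L w).2 = (L v).2 ⬝ᵥ (L w).1

/-- Holomorphic maps to the one-jet space which are tangent to the contact structure; no rank
condition is imposed. -/
structure IsLegendrianMap (G : E → JetSpace n) : Prop where
  differentiable : Differentiable ℂ G
  tangent : ∀ x v, (fderiv ℂ G x v).2.1 = (G x).2.2 ⬝ᵥ (fderiv ℂ G x v).1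

/-- Holomorphic maps of the one-jet space whose differential sends contact hyperplanes into
contact hyperplanes. -/
structure IsContactMap (F : JetSpace n → JetSpace n) : Prop where
  differentiable : Differentiable ℂ F
  tangent : ∀ p x, (fderiv ℂ F p (contactLift p.2.2 x)).2.1 =
    (F p).2.2 ⬝ᵥ (fderiv ℂ F p (contactLift p.2.2 x)).1

/-- The differential of a contact map between contact hyperplanes, in the coordinates
`contactLift`. -/
noncomputable def contactDeriv (F : JetSpace n → JetSpace n) (p : JetSpace n) :
    (Fin n → ℂ) × (Fin n → ℂ) →L[ℂ] (Fin n → ℂ) × (Fin n → ℂ) :=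
  forgetValue ∘L fderiv ℂ F p ∘L contactLift p.2.2

theorem contactDeriv_apply (F : JetSpace n → JetSpace n) (p : JetSpace n)
    (x : (Fin n → ℂ) × (Fin n → ℂ)) :
    contactDeriv F p x = forgetValue (fderiv ℂ F p (contactLift p.2.2 x)) := rfl

/-- The quadratic Legendrian map through `p` whose differential at `0` is `L`, for `L`
isotropic. -/
noncomputable def planeMap (p : JetSpace n) (L : E →L[ℂ] (Fin n → ℂ) × (Fin n → ℂ)) (w : E) :
    JetSpace n :=
  (p.1 + (L w).1, p.2.1 + p.2.2 ⬝ᵥ (L w).1 + (1 / 2) * ((L w).2 ⬝ᵥ (L w).1), p.2.2 + (L w).2)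

theorem IsLegendrianMap.fderiv_apply {G : E → JetSpace n} (hG : IsLegendrianMap G) (x v : E) :
    fderiv ℂ G x v = contactLift (G x).2.2 (forgetValue (fderiv ℂ G x v)) :=
  Prod.ext rfl (Prod.ext (hG.tangent x v) rfl)

theorem IsLegendrianMap.isIsotropic [FiniteDimensional ℂ E] {G : E → JetSpace n}
    (hG : IsLegendrianMap G) (x : E) : IsIsotropic (forgetValue ∘L fderiv ℂ G x) := by
  intro v w
  have hG₁ := hG.differentiable
  have hG₂ : Differentiable ℂ (fderiv ℂ G) := differentiable_fderiv_of_differentiable hG₁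
  have hderiv : ∀ v w, (fderiv ℂ (fderiv ℂ G) x w v).2.1 =
      (G x).2.2 ⬝ᵥ (fderiv ℂ (fderiv ℂ G) x w v).1 +
        (fderiv ℂ G x w).2.2 ⬝ᵥ (fderiv ℂ G x v).1 := fun v w => by
    have hv : HasFDerivAt (fun y => fderiv ℂ G y v) _ x :=
      (hG₂ x).hasFDerivAt.clm_apply (hasFDerivAt_const v x)
    have h := congrArg (fun f => fderiv ℂ f x w) (funext fun y => hG.tangent y v)
    beta_reduce at h
    rw [fderiv_dotProduct_apply (hG₁ x).snd.snd hv.fst.differentiableAt, hv.snd.fst.fderiv,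
      hv.fst.fderiv, (hG₁ x).hasFDerivAt.snd.snd.fderiv] at h
    simpa using h
  have hsymm := second_derivative_symmetric (fun y => (hG₁ y).hasFDerivAt)
    (hG₂ x).hasFDerivAt v w
  have hwv := hderiv w v
  rw [hsymm] at hwv
  simp only [ContinuousLinearMap.comp_apply, forgetValue_apply]
  rw [dotProduct_comm]
  linear_combination hwv - hderiv v w

@[simp]
theorem planeMap_zero (p : JetSpace n) (L : E →L[ℂ] (Fin n → ℂ) × (Fin n → ℂ)) :
    planeMap p L 0 = p := by
  simp [planeMap]

theorem fderiv_planeMap (p : JetSpace n) {L : E →L[ℂ] (Fin n → ℂ) × (Fin n → ℂ)}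
    (hL : IsIsotropic L) (w h : E) :
    fderiv ℂ (planeMap p L) w h = contactLift (p.2.2 + (L w).2) (L h) := by
  have h₁ : HasFDerivAt (fun w => (L w).1) _ w := L.hasFDerivAt.fst
  have h₂ : HasFDerivAt (fun w => (L w).2) _ w := L.hasFDerivAt.snd
  have hb := differentiableAt_const (𝕜 := ℂ) (x := w) p.2.2
  have hbθ : DifferentiableAt ℂ (fun w => p.2.2 ⬝ᵥ (L w).1) w := by fun_prop
  have hvθ : DifferentiableAt ℂ (fun w => (L w).2 ⬝ᵥ (L w).1) w := by fun_prop
  have hp : HasFDerivAt (planeMap p L) _ w := (h₁.const_add p.1).prodMk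
    (((hbθ.hasFDerivAt.const_add p.2.1).add (hvθ.hasFDerivAt.const_mul (1 / 2))).prodMk
      (h₂.const_add p.2.2))
  rw [hp.fderiv]
  refine Prod.ext rfl (Prod.ext ?_ rfl)
  simp only [ContinuousLinearMap.prod_apply, _root_.add_apply, _root_.smul_apply,
    fderiv_dotProduct_apply hb h₁.differentiableAt,
    fderiv_dotProduct_apply h₂.differentiableAt h₁.differentiableAt, h₁.fderiv, h₂.fderiv,
    fderiv_fun_const, Pi.zero_apply, _root_.zero_apply, zero_dotProduct, add_zero,
    contactLift_apply, ContinuousLinearMap.comp_apply, ContinuousLinearMap.coe_fst',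
    ContinuousLinearMap.coe_snd', add_dotProduct, smul_eq_mul]
  linear_combination (1 / 2) * (dotProduct_comm (L h).2 (L w).1).trans (hL w h)

theorem isLegendrianMap_planeMap (p : JetSpace n) {L : E →L[ℂ] (Fin n → ℂ) × (Fin n → ℂ)}
    (hL : IsIsotropic L) : IsLegendrianMap (planeMap p L) where
  differentiable := by
    unfold planeMap
    fun_prop
  tangent w h := by
    rw [fderiv_planeMap p hL]
    rfl

variable {F : JetSpace n → JetSpace n}

namespace IsContactMap

theorem fderiv_contactLift (hF : IsContactMap F) (p : JetSpace n)
    (x : (Fin n → ℂ) × (Fin n → ℂ)) :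
    fderiv ℂ F p (contactLift p.2.2 x) = contactLift (F p).2.2 (contactDeriv F p x) :=
  Prod.ext rfl (Prod.ext (hF.tangent p x) rfl)

theorem fderiv_comp_contactLift {H : JetSpace n → JetSpace n} (hH : IsContactMap H)
    (hF : IsContactMap F) (p : JetSpace n) (x : (Fin n → ℂ) × (Fin n → ℂ)) :
    fderiv ℂ (H ∘ F) p (contactLift p.2.2 x) =
      contactLift (H (F p)).2.2 (contactDeriv H (F p) (contactDeriv F p x)) := by
  rw [fderiv_comp p (hH.differentiable _) (hF.differentiable p), ContinuousLinearMap.comp_apply,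
    hF.fderiv_contactLift, hH.fderiv_contactLift]

theorem comp {H : JetSpace n → JetSpace n} (hH : IsContactMap H) (hF : IsContactMap F) :
    IsContactMap (H ∘ F) where
  differentiable := hH.differentiable.comp hF.differentiable
  tangent p x := by
    rw [hH.fderiv_comp_contactLift hF]
    rfl

theorem contactDeriv_comp {H : JetSpace n → JetSpace n} (hH : IsContactMap H)
    (hF : IsContactMap F) (p : JetSpace n) (x : (Fin n → ℂ) × (Fin n → ℂ)) :
    contactDeriv (H ∘ F) p x = contactDeriv H (F p) (contactDeriv F p x) := by
  rw [contactDeriv_apply, hH.fderiv_comp_contactLift hF, forgetValue_contactLift]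

theorem contactDeriv_contactDeriv (hF : IsContactMap F) (hFF : Function.Involutive F)
    (p : JetSpace n) (x : (Fin n → ℂ) × (Fin n → ℂ)) :
    contactDeriv F (F p) (contactDeriv F p x) = x := by
  rw [← hF.contactDeriv_comp hF, hFF.comp_self]
  simp [contactDeriv]

theorem surjective_contactDeriv (hF : IsContactMap F) (hFF : Function.Involutive F)
    (p : JetSpace n) : Function.Surjective (contactDeriv F p) := fun x =>
  ⟨contactDeriv F (F p) x, by simpa only [hFF p] using hF.contactDeriv_contactDeriv hFF (F p) x⟩

theorem fderiv_comp_apply (hF : IsContactMap F) {G : E → JetSpace n} (hG : IsLegendrianMap G)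
    (x v : E) : fderiv ℂ (F ∘ G) x v =
      contactLift (F (G x)).2.2 (contactDeriv F (G x) (forgetValue (fderiv ℂ G x v))) := by
  rw [fderiv_comp x (hF.differentiable _) (hG.differentiable x), ContinuousLinearMap.comp_apply,
    hG.fderiv_apply, hF.fderiv_contactLift]
  rfl

theorem comp_isLegendrianMap (hF : IsContactMap F) {G : E → JetSpace n}
    (hG : IsLegendrianMap G) : IsLegendrianMap (F ∘ G) where
  differentiable := hF.differentiable.comp hG.differentiable
  tangent x v := by
    rw [hF.fderiv_comp_apply hG]
    rfl

theorem fderiv_comp_planeMap_zero (hF : IsContactMap F) (p : JetSpace n)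
    {L : E →L[ℂ] (Fin n → ℂ) × (Fin n → ℂ)} (hL : IsIsotropic L) (v : E) :
    fderiv ℂ (F ∘ planeMap p L) 0 v = contactLift (F p).2.2 (contactDeriv F p (L v)) := by
  rw [hF.fderiv_comp_apply (isLegendrianMap_planeMap p hL), planeMap_zero, fderiv_planeMap p hL]
  rfl

theorem isIsotropic_contactDeriv_comp [FiniteDimensional ℂ E] (hF : IsContactMap F)
    (p : JetSpace n) {L : E →L[ℂ] (Fin n → ℂ) × (Fin n → ℂ)} (hL : IsIsotropic L) :
    IsIsotropic (contactDeriv F p ∘L L) := by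
  have h := (hF.comp_isLegendrianMap (isLegendrianMap_planeMap p hL)).isIsotropic 0
  have hderiv : forgetValue ∘L fderiv ℂ (F ∘ planeMap p L) 0 = contactDeriv F p ∘L L :=
    ContinuousLinearMap.ext fun v => by
      rw [ContinuousLinearMap.comp_apply, hF.fderiv_comp_planeMap_zero p hL,
        forgetValue_contactLift, ContinuousLinearMap.comp_apply]
  rwa [hderiv] at h

theorem eq_id_of_forall_fst_eq (hF : IsContactMap F) (h₁ : ∀ p, (F p).1 = p.1)
    (h₂ : ∀ p, (F p).2.1 = p.2.1) : F = id := by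
  funext p
  refine Prod.ext (h₁ p) (Prod.ext (h₂ p) (dotProduct_eq _ _ fun u => ?_))
  have hd₁ : ∀ x, (fderiv ℂ F p x).1 = x.1 := fun x => by
    have h := (hF.differentiable p).hasFDerivAt.fst
    rw [funext h₁] at h
    exact congrArg (fun L => L x) (h.unique hasFDerivAt_fst)
  have hd₂ : ∀ x, (fderiv ℂ F p x).2.1 = x.2.1 := fun x => by
    have h := (hF.differentiable p).hasFDerivAt.snd.fst
    rw [funext h₂] at h
    exact congrArg (fun L => L x) (h.unique hasFDerivAt_snd.fst)
  have h := hF.tangent p (u, 0)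
  rw [hd₁, hd₂] at h
  exact h.symm

end IsContactMap

theorem differentiable_contactDeriv (hF : Differentiable ℂ F) :
    Differentiable ℂ fun q : JetSpace n × (Fin n → ℂ) × (Fin n → ℂ) =>
      contactDeriv F q.1 q.2 := by
  have hF' := differentiable_fderiv_of_differentiable hF
  simp only [contactDeriv, ContinuousLinearMap.comp_apply, contactLift_apply]
  fun_prop

end ContactGeometry

section GX

open Matrix

variable {n : ℕ}

theorem dense_cRegPts_iff {f : (Fin n → ℂ) → Fin n → ℂ} (hf : Differentiable ℂ f) :
    Dense (CRegPts n f) ↔ ∃ x, Function.Injective (fderiv ℂ f x) := by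
  let D : (Fin n → ℂ) → ℂ := fun x => (fderiv ℂ f x : (Fin n → ℂ) →ₗ[ℂ] Fin n → ℂ).toMatrix'.det
  have hreg : ∀ x, Function.Bijective (fderiv ℂ f x) ↔ Function.Injective (fderiv ℂ f x) :=
    fun x => ⟨And.left, fun h => ⟨h, (LinearMap.injective_iff_surjective
      (f := (fderiv ℂ f x : (Fin n → ℂ) →ₗ[ℂ] Fin n → ℂ))).1 h⟩⟩
  have hD : ∀ x, D x ≠ 0 ↔ Function.Injective (fderiv ℂ f x) := fun x => by
    rw [← isUnit_iff_ne_zero, ← isUnit_iff_isUnit_det, ← mulVec_injective_iff_isUnit]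
    exact iff_of_eq (congrArg _ (funext (LinearMap.toMatrix'_mulVec _)))
  have hdiff : Differentiable ℂ D := differentiable_det fun i j =>
    differentiable_pi.1 (differentiable_fderiv_apply hf (Pi.single j 1)) i
  have hset : CRegPts n f = {x | D x ≠ 0} := Set.ext fun x => (hreg x).trans (hD x).symm
  simp only [hset, ← hD]
  exact ⟨Dense.nonempty, fun ⟨_, hx⟩ => dense_setOf_ne_zero hdiff hx⟩

/-- The triple of components of a map to the one-jet space; inverse to `cPackTriple`. -/
def unpackTriple (G : (Fin n → ℂ) → JetSpace n) : CTripleMap n :=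
  (fun x => (G x).1, fun x => (G x).2.1, fun x => (G x).2.2)

theorem cCreative_unpackTriple_iff {G : (Fin n → ℂ) → JetSpace n} (hG : Differentiable ℂ G) :
    CCreative n (unpackTriple G) ↔
      ∀ x v, (fderiv ℂ G x v).2.1 = (G x).2.2 ⬝ᵥ (fderiv ℂ G x v).1 := by
  have hθ : ∀ x v i, fderiv ℂ (fun y => (G y).1 i) x v = (fderiv ℂ G x v).1 i := fun x v i => by
    rw [(hasFDerivAt_pi'.1 (hG x).hasFDerivAt.fst i).fderiv]
    rfl
  have ha : ∀ x v, fderiv ℂ (fun y => (G y).2.1) x v = (fderiv ℂ G x v).2.1 := fun x v => by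
    rw [(hG x).hasFDerivAt.snd.fst.fderiv]
    rfl
  simp only [CCreative, unpackTriple, hθ, ha]
  rfl

theorem unpackTriple_mem_CGXset_iff {G : (Fin n → ℂ) → JetSpace n} :
    unpackTriple G ∈ CGXset n ↔ IsLegendrianMap G ∧
      (∃ x, Function.Injective fun v => (fderiv ℂ G x v).1) ∧
      ∃ x, Function.Injective fun v => (fderiv ℂ G x v).2.2 := by
  have hol : HolTriple n (unpackTriple G) ↔ Differentiable ℂ G :=
    ⟨fun h => h.1.prodMk (h.2.1.prodMk h.2.2), fun h => ⟨h.fst, h.snd.fst, h.snd.snd⟩⟩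
  have legendrian : IsLegendrianMap G ↔ Differentiable ℂ G ∧ CCreative n (unpackTriple G) :=
    ⟨fun h => ⟨h.1, (cCreative_unpackTriple_iff h.1).2 h.2⟩,
      fun h => ⟨h.1, (cCreative_unpackTriple_iff h.1).1 h.2⟩⟩
  rw [legendrian, and_assoc]
  refine (and_congr_left' hol).trans <| and_congr_right fun hG => and_congr_right fun _ => ?_
  have hθ : ∀ x, ⇑(fderiv ℂ (fun y => (G y).1) x) = fun v => (fderiv ℂ G x v).1 := fun x => by
    rw [(hG x).hasFDerivAt.fst.fderiv]
    rfl
  have hb : ∀ x, ⇑(fderiv ℂ (fun y => (G y).2.2) x) = fun v => (fderiv ℂ G x v).2.2 :=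
    fun x => by
      rw [(hG x).hasFDerivAt.snd.snd.fderiv]
      rfl
  simp only [unpackTriple, dense_cRegPts_iff hG.fst, dense_cRegPts_iff hG.snd.snd, hθ, hb]

theorem unpackTriple_planeMap_mem_CGXset_iff (p : JetSpace n)
    {L : (Fin n → ℂ) →L[ℂ] (Fin n → ℂ) × (Fin n → ℂ)} (hL : IsIsotropic L) :
    unpackTriple (planeMap p L) ∈ CGXset n ↔
      Function.Injective (fun v => (L v).1) ∧ Function.Injective fun v => (L v).2 := by
  simp [unpackTriple_mem_CGXset_iff, isLegendrianMap_planeMap p hL, fderiv_planeMap p hL]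

/-- The linear map `w ↦ (w, M w)` parametrizing the graph of a matrix. -/
noncomputable def graphMap (M : Matrix (Fin n) (Fin n) ℂ) :
    (Fin n → ℂ) →L[ℂ] (Fin n → ℂ) × (Fin n → ℂ) :=
  (ContinuousLinearMap.id ℂ _).prod M.mulVecLin.toContinuousLinearMap

@[simp]
theorem graphMap_apply (M : Matrix (Fin n) (Fin n) ℂ) (w : Fin n → ℂ) :
    graphMap M w = (w, M *ᵥ w) := rfl

theorem isIsotropic_graphMap {M : Matrix (Fin n) (Fin n) ℂ} (hM : M.IsSymm) :
    IsIsotropic (graphMap M) := isSymm_dotProduct_mulVec_comm hM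

theorem unpackTriple_planeMap_graphMap_mem_CGXset (p : JetSpace n)
    {M : Matrix (Fin n) (Fin n) ℂ} (hM : M.IsSymm) (hM' : Function.Injective M.mulVec) :
    unpackTriple (planeMap p (graphMap M)) ∈ CGXset n :=
  (unpackTriple_planeMap_mem_CGXset_iff p (isIsotropic_graphMap hM)).2
    ⟨Function.injective_id, hM'⟩

theorem unpackTriple_planeMap_graphMap_smul_one_mem_CGXset (p : JetSpace n) {c : ℂ}
    (hc : c ≠ 0) : unpackTriple (planeMap p (graphMap (c • 1))) ∈ CGXset n :=
  unpackTriple_planeMap_graphMap_mem_CGXset p (isSymm_one.smul c)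
    fun x y h => by simpa [smul_mulVec, hc] using h

/-- Maps of the one-jet space which act on `GX_ℂ` by composition. -/
def PreservesGX (F : JetSpace n → JetSpace n) : Prop :=
  ∀ G, unpackTriple G ∈ CGXset n → unpackTriple (F ∘ G) ∈ CGXset n

variable {F : JetSpace n → JetSpace n}

theorem PreservesGX.isContactMap (hGX : PreservesGX F) (hF : Differentiable ℂ F) :
    IsContactMap F := by
  have hslope : ∀ (p : JetSpace n) (c : ℂ) (u : Fin n → ℂ), c ≠ 0 →
      (fderiv ℂ F p (contactLift p.2.2 (u, c • u))).2.1 =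
        (F p).2.2 ⬝ᵥ (fderiv ℂ F p (contactLift p.2.2 (u, c • u))).1 := fun p c u hc => by
    have hmem := unpackTriple_planeMap_graphMap_smul_one_mem_CGXset p hc
    have hd := (unpackTriple_mem_CGXset_iff.1 hmem).1.differentiable
    have h := (unpackTriple_mem_CGXset_iff.1 (hGX _ hmem)).1.tangent 0 u
    rw [fderiv_comp 0 (hF _) (hd 0), ContinuousLinearMap.comp_apply,
      fderiv_planeMap p (isIsotropic_graphMap (isSymm_one.smul c)), Function.comp_apply,
      planeMap_zero] at h
    simpa [smul_mulVec] using h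
  refine ⟨hF, fun p x => ?_⟩
  have hx : x = ((2 : ℂ) • x.1 - x.2, (1 : ℂ) • ((2 : ℂ) • x.1 - x.2)) +
      (x.2 - x.1, (2 : ℂ) • (x.2 - x.1)) := by
    ext i <;> simp <;> ring
  rw [hx, map_add, map_add, Prod.fst_add, Prod.snd_add, Prod.fst_add, dotProduct_add,
    hslope p 1 _ one_ne_zero, hslope p 2 _ two_ne_zero]

theorem PreservesGX.ne_zero_of_contactDeriv_ne_zero (hGX : PreservesGX F) (hF : IsContactMap F)
    (hFF : Function.Involutive F) {p : JetSpace n} {z : (Fin n → ℂ) × (Fin n → ℂ)}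
    (h₁ : (contactDeriv F p z).1 ≠ 0) (h₂ : (contactDeriv F p z).2 ≠ 0) :
    z.1 ≠ 0 ∧ z.2 ≠ 0 := by
  -- The plane through `p` which `F` maps to the graph of `M` contains `z` and belongs to `GX_ℂ`.
  obtain ⟨M, hM, hinj, hMz⟩ := exists_isSymm_injective_mulVec_eq h₁ h₂
  let L := contactDeriv F (F p) ∘L graphMap M
  have hL : IsIsotropic L := hF.isIsotropic_contactDeriv_comp _ (isIsotropic_graphMap hM)
  have hderiv : ∀ v, fderiv ℂ (F ∘ planeMap p L) 0 v = contactLift (F p).2.2 (v, M *ᵥ v) :=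
    fun v => by
      have h := hF.contactDeriv_contactDeriv hFF (F p) (graphMap M v)
      rw [hFF p] at h
      rw [hF.fderiv_comp_planeMap_zero p hL, ContinuousLinearMap.comp_apply, h, graphMap_apply]
  have himage : unpackTriple (F ∘ planeMap p L) ∈ CGXset n := by
    refine unpackTriple_mem_CGXset_iff.2 ⟨hF.comp_isLegendrianMap (isLegendrianMap_planeMap p hL),
      ⟨0, ?_⟩, 0, ?_⟩ <;> simp only [hderiv, contactLift_apply]
    exacts [Function.injective_id, hinj]
  have hplane := hGX _ himage
  rw [← Function.comp_assoc, hFF.comp_self, Function.id_comp,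
    unpackTriple_planeMap_mem_CGXset_iff p hL] at hplane
  have hLz : L (contactDeriv F p z).1 = z := by
    rw [ContinuousLinearMap.comp_apply, graphMap_apply, hMz, Prod.mk.eta,
      hF.contactDeriv_contactDeriv hFF]
  have hfst := hplane.1.ne h₁
  have hsnd := hplane.2.ne h₁
  simp only [hLz, map_zero] at hfst hsnd
  exact ⟨hfst, hsnd⟩

end GX

section Foliations

open Matrix

variable {n : ℕ} {F : JetSpace n → JetSpace n}

/-- Contact maps whose differential preserves both Legendrian directions, the horizontal one
`(u, 0)` and the vertical one `(0, v)`. -/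
def PreservesFoliations (F : JetSpace n → JetSpace n) : Prop :=
  (∀ p u, (contactDeriv F p (u, 0)).2 = 0) ∧ ∀ p v, (contactDeriv F p (0, v)).1 = 0

/-- Contact maps whose differential exchanges the horizontal Legendrian direction `(u, 0)` with
the vertical one `(0, v)`. -/
def ExchangesFoliations (F : JetSpace n → JetSpace n) : Prop :=
  (∀ p u, (contactDeriv F p (u, 0)).1 = 0) ∧ ∀ p v, (contactDeriv F p (0, v)).2 = 0

theorem IsContactMap.preservesFoliations_or_exchangesFoliations [Nonempty (Fin n)]
    (hF : IsContactMap F) (hFF : Function.Involutive F) (hGX : PreservesGX F) :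
    PreservesFoliations F ∨ ExchangesFoliations F := by
  have hd := differentiable_contactDeriv hF.differentiable
  have hinl : Differentiable ℂ fun q : JetSpace n × (Fin n → ℂ) => contactDeriv F q.1 (q.2, 0) :=
    hd.comp (by fun_prop : Differentiable ℂ fun q : JetSpace n × (Fin n → ℂ) =>
      (q.1, q.2, (0 : Fin n → ℂ)))
  have hinr : Differentiable ℂ fun q : JetSpace n × (Fin n → ℂ) => contactDeriv F q.1 (0, q.2) :=
    hd.comp (by fun_prop : Differentiable ℂ fun q : JetSpace n × (Fin n → ℂ) =>
      (q.1, (0 : Fin n → ℂ), q.2))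
  have hhor := forall_eq_zero_or_forall_eq_zero hinl.fst hinl.snd.continuous fun q => by
    by_contra! h
    exact (hGX.ne_zero_of_contactDeriv_ne_zero hF hFF h.1 h.2).2 rfl
  have hver := forall_eq_zero_or_forall_eq_zero hinr.fst hinr.snd.continuous fun q => by
    by_contra! h
    exact (hGX.ne_zero_of_contactDeriv_ne_zero hF hFF h.1 h.2).1 rfl
  obtain ⟨x, hx⟩ := hF.surjective_contactDeriv hFF 0 (1, 1)
  have hsplit : contactDeriv F 0 (x.1, 0) + contactDeriv F 0 (0, x.2) = (1, 1) := by
    rw [← map_add, Prod.mk_add_mk, add_zero, zero_add, hx]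
  obtain ⟨hfst, hsnd⟩ := Prod.ext_iff.1 hsplit
  rw [Prod.fst_add] at hfst
  rw [Prod.snd_add] at hsnd
  rcases hhor with hhor | hhor <;> rcases hver with hver | hver
  · rw [hhor (0, x.1), hver (0, x.2), add_zero] at hfst
    exact absurd hfst zero_ne_one
  · exact .inr ⟨fun p u => hhor (p, u), fun p v => hver (p, v)⟩
  · exact .inl ⟨fun p u => hhor (p, u), fun p v => hver (p, v)⟩
  · rw [hhor (0, x.1), hver (0, x.2), add_zero] at hsnd
    exact absurd hsnd zero_ne_one

theorem IsContactMap.apply_eq_of_forall_fst_contactDeriv_eq_zero (hF : IsContactMap F)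
    (h : ∀ p v, (contactDeriv F p (0, v)).1 = 0) (θ : Fin n → ℂ) (a : ℂ) (b b' : Fin n → ℂ) :
    (F (θ, a, b)).1 = (F (θ, a, b')).1 ∧ (F (θ, a, b)).2.1 = (F (θ, a, b')).2.1 := by
  have hderiv : ∀ b, HasFDerivAt (fun b => ((F (θ, a, b)).1, (F (θ, a, b)).2.1))
      (0 : (Fin n → ℂ) →L[ℂ] (Fin n → ℂ) × ℂ) b := fun b => by
    have hleaf : HasFDerivAt (fun b => F (θ, a, b)) _ b := (hF.differentiable _).hasFDerivAt.comp b
      ((hasFDerivAt_const θ b).prodMk ((hasFDerivAt_const a b).prodMk (hasFDerivAt_id b)))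
    have htangent : ∀ v, fderiv ℂ F (θ, a, b) (0, 0, v) =
        contactLift (F (θ, a, b)).2.2 (contactDeriv F (θ, a, b) (0, v)) := fun v => by
      rw [← hF.fderiv_contactLift, contactLift_apply, dotProduct_zero]
    refine (hleaf.fst.prodMk hleaf.snd.fst).congr_fderiv (ContinuousLinearMap.ext fun v => ?_)
    simp [htangent, h]
  have hconst := is_const_of_fderiv_eq_zero (fun b => (hderiv b).differentiableAt)
    (fun b => (hderiv b).fderiv) b b'
  exact Prod.ext_iff.1 hconst

/-- The Legendre involution of the one-jet space. -/
def legendreMap (p : JetSpace n) : JetSpace n := (p.2.2, p.2.2 ⬝ᵥ p.1 - p.2.1, p.1)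

theorem legendreMap_involutive : Function.Involutive (legendreMap (n := n)) := fun p => by
  simp [legendreMap, dotProduct_comm]

theorem fderiv_legendreMap_contactLift (p : JetSpace n) (x : (Fin n → ℂ) × (Fin n → ℂ)) :
    fderiv ℂ legendreMap p (contactLift p.2.2 x) = contactLift p.1 x.swap := by
  have hid : HasFDerivAt (fun q : JetSpace n => q) _ p := hasFDerivAt_id (𝕜 := ℂ) p
  have hdot : DifferentiableAt ℂ (fun q : JetSpace n => q.2.2 ⬝ᵥ q.1) p := by fun_prop
  have h : HasFDerivAt legendreMap _ p :=
    hid.snd.snd.prodMk ((hdot.hasFDerivAt.sub hid.snd.fst).prodMk hid.fst)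
  rw [h.fderiv]
  refine Prod.ext rfl (Prod.ext ?_ rfl)
  simp only [ContinuousLinearMap.prod_apply, _root_.sub_apply,
    fderiv_dotProduct_apply hid.snd.snd.differentiableAt hid.fst.differentiableAt,
    hid.snd.snd.fderiv, hid.fst.fderiv]
  simp [dotProduct_comm]

theorem isContactMap_legendreMap : IsContactMap (legendreMap (n := n)) where
  differentiable := by
    unfold legendreMap
    fun_prop
  tangent p x := by
    rw [fderiv_legendreMap_contactLift]
    rfl

theorem contactDeriv_legendreMap (p : JetSpace n) (x : (Fin n → ℂ) × (Fin n → ℂ)) :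
    contactDeriv legendreMap p x = x.swap := by
  rw [contactDeriv_apply, fderiv_legendreMap_contactLift, forgetValue_contactLift]

theorem ExchangesFoliations.legendreMap_comp (h : ExchangesFoliations F) (hF : IsContactMap F) :
    PreservesFoliations (legendreMap ∘ F) := by
  simp only [PreservesFoliations, isContactMap_legendreMap.contactDeriv_comp hF,
    contactDeriv_legendreMap, Prod.fst_swap, Prod.snd_swap]
  exact h

theorem PreservesFoliations.comp_legendreMap (h : PreservesFoliations F) (hF : IsContactMap F) :
    ExchangesFoliations (F ∘ legendreMap) := by
  simp only [ExchangesFoliations, hF.contactDeriv_comp isContactMap_legendreMap,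
    contactDeriv_legendreMap]
  exact ⟨fun p => h.2 _, fun p => h.1 _⟩

/-- The one-jet `(θ, q θ, dq θ)` of the quadratic form `q θ = ½ θ · θ`, which underlies
`GY_ℂ`. -/
noncomputable def paraboloid (θ : Fin n → ℂ) : JetSpace n := (θ, (1 / 2) * (θ ⬝ᵥ θ), θ)

theorem legendreMap_paraboloid (θ : Fin n → ℂ) : legendreMap (paraboloid θ) = paraboloid θ := by
  refine Prod.ext rfl (Prod.ext ?_ rfl)
  simp only [legendreMap, paraboloid]
  ring

theorem PreservesFoliations.eq_id [Nonempty (Fin n)] (h : PreservesFoliations F)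
    (hF : IsContactMap F) (hY : ∀ θ, F (paraboloid θ) = paraboloid θ) : F = id := by
  let K := legendreMap ∘ F ∘ legendreMap
  have hK : IsContactMap K :=
    isContactMap_legendreMap.comp (hF.comp isContactMap_legendreMap)
  have hKp : PreservesFoliations K :=
    (h.comp_legendreMap hF).legendreMap_comp (hF.comp isContactMap_legendreMap)
  have hFθ : ∀ θ b, (F (θ, (1 / 2) * (θ ⬝ᵥ θ), b)).1 = θ ∧
      (F (θ, (1 / 2) * (θ ⬝ᵥ θ), b)).2.1 = (1 / 2) * (θ ⬝ᵥ θ) := fun θ b => by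
    have hleaf := hF.apply_eq_of_forall_fst_contactDeriv_eq_zero h.2 θ ((1 / 2) * (θ ⬝ᵥ θ)) b θ
    have hYθ := hY θ
    rw [paraboloid] at hYθ
    rwa [hYθ] at hleaf
  have hgen : ∀ p : JetSpace n, p.1 ⬝ᵥ p.1 - 2 * p.2.1 ≠ 0 →
      (K p).1 = p.1 ∧ (K p).2.1 = p.2.1 := fun ⟨b, c, θ₀⟩ hp => by
    refine eq_of_forall_quadric hp fun θ hθ => ?_
    obtain ⟨h₁, h₂⟩ := hK.apply_eq_of_forall_fst_contactDeriv_eq_zero hKp.2 b c θ₀ θ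
    have hvalue : θ ⬝ᵥ b - c = (1 / 2) * (θ ⬝ᵥ θ) := by
      rw [dotProduct_comm]
      linear_combination (-1 / 2) * hθ
    obtain ⟨hθ₁, hθ₂⟩ := hFθ θ b
    rw [h₁, h₂, dotProduct_comm b]
    simp only [K, Function.comp_apply, legendreMap, hvalue, hθ₁, hθ₂]
    ring
  have hdense : Dense {p : JetSpace n | p.1 ⬝ᵥ p.1 - 2 * p.2.1 ≠ 0} :=
    dense_setOf_ne_zero (by fun_prop) (p := (0, 1, 0)) (by simp)
  have hcont := hK.differentiable.continuous
  have hKid : K = id := hK.eq_id_of_forall_fst_eq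
    (congrFun <| hcont.fst.ext_on hdense continuous_fst fun p hp => (hgen p hp).1)
    (congrFun <| hcont.snd.fst.ext_on hdense continuous_snd.fst fun p hp => (hgen p hp).2)
  funext p
  have hp := congrArg legendreMap (congrFun hKid (legendreMap p))
  simpa only [K, Function.comp_apply, id, legendreMap_involutive _] using hp

theorem ExchangesFoliations.eq_legendreMap [Nonempty (Fin n)] (h : ExchangesFoliations F)
    (hF : IsContactMap F) (hY : ∀ θ, F (paraboloid θ) = paraboloid θ) : F = legendreMap := by
  have hid := (h.legendreMap_comp hF).eq_id (isContactMap_legendreMap.comp hF) fun θ => by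
    rw [Function.comp_apply, hY, legendreMap_paraboloid]
  funext p
  exact legendreMap_involutive.eq_iff.1 (congrFun hid p)

theorem PreservesGX.eq_id_or_eq_legendreMap [Nonempty (Fin n)] (hGX : PreservesGX F)
    (hF : Differentiable ℂ F) (hFF : Function.Involutive F)
    (hY : ∀ θ, F (paraboloid θ) = paraboloid θ) : F = id ∨ F = legendreMap := by
  have hc := hGX.isContactMap hF
  exact (hc.preservesFoliations_or_exchangesFoliations hFF hGX).imp
    (fun h => h.eq_id hc hY) fun h => h.eq_legendreMap hc hY

end Foliations

section Transforms

variable {n : ℕ}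

theorem unpackTriple_paraboloid_mem_CGXset :
    unpackTriple (paraboloid (n := n)) ∈ CGXset n := by
  have h : paraboloid (n := n) = planeMap 0 (graphMap ((1 : ℂ) • 1)) := by
    funext θ
    simp [paraboloid, planeMap]
  rw [h]
  exact unpackTriple_planeMap_graphMap_smul_one_mem_CGXset 0 one_ne_zero

theorem unpackTriple_paraboloid_mem_CGYset :
    unpackTriple (paraboloid (n := n)) ∈ CGYset n := by
  refine ⟨fun θ => θ, differentiable_id, unpackTriple_paraboloid_mem_CGXset.2.2.1, ?_⟩
  simp [unpackTriple, paraboloid, dotProduct, sq]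

theorem exists_mem_CGXset_notMem_CGYset (hn : 1 ≤ n) : ∃ Φ ∈ CGXset n, Φ ∉ CGYset n := by
  refine ⟨_, unpackTriple_planeMap_graphMap_smul_one_mem_CGXset 0 two_ne_zero, ?_⟩
  rintro ⟨θ, -, -, h⟩
  have hθ := (congrArg (fun Φ => Φ.2.2) h).trans (congrArg (fun Φ => Φ.1) h).symm
  have hone := congrFun (congrFun hθ 1) ⟨0, hn⟩
  norm_num [unpackTriple, planeMap, Matrix.smul_mulVec] at hone

theorem complex_legendre_involution_characterization_general (n : ℕ) (hn : 1 ≤ n)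
    (T : CTripleMap n → CTripleMap n)
    (hmap : ∀ Φ ∈ CGXset n, T Φ ∈ CGXset n)
    (hinv : ∀ Φ ∈ CGXset n, T (T Φ) = Φ)
    (hfix : ∀ Φ ∈ CGXset n, Φ ∈ CGYset n → T Φ = Φ)
    (hne : ∃ Φ ∈ CGXset n, T Φ ≠ Φ)
    (F : (Fin n → ℂ) × ℂ × (Fin n → ℂ) → (Fin n → ℂ) × ℂ × (Fin n → ℂ))
    (hF : Differentiable ℂ F)
    (hTF : ∀ Φ ∈ CGXset n, cPackTriple n (T Φ) = F ∘ cPackTriple n Φ) :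
    ∀ Φ ∈ CGXset n, T Φ = CLegendre n Φ := by
  have : Nonempty (Fin n) := ⟨⟨0, hn⟩⟩
  have hT : ∀ Φ ∈ CGXset n, T Φ = unpackTriple (F ∘ cPackTriple n Φ) := fun Φ hΦ =>
    congrArg unpackTriple (hTF Φ hΦ)
  have hGX : PreservesGX F := fun G hG => hT _ hG ▸ hmap _ hG
  have hFF : Function.Involutive F := fun p => by
    have hmem := unpackTriple_planeMap_graphMap_smul_one_mem_CGXset p (one_ne_zero (α := ℂ))
    have h := hinv _ hmem
    rw [hT _ (hmap _ hmem), hT _ hmem] at h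
    have hzero : F (F (planeMap p (graphMap ((1 : ℂ) • 1)) 0)) =
        planeMap p (graphMap ((1 : ℂ) • 1)) 0 := congrFun (congrArg (cPackTriple n) h) 0
    rwa [planeMap_zero] at hzero
  have hY : ∀ θ, F (paraboloid θ) = paraboloid θ := fun θ => by
    have h := hfix _ unpackTriple_paraboloid_mem_CGXset unpackTriple_paraboloid_mem_CGYset
    rw [hT _ unpackTriple_paraboloid_mem_CGXset] at h
    exact congrFun (congrArg (cPackTriple n) h) θ
  rcases hGX.eq_id_or_eq_legendreMap hF hFF hY with rfl | rfl
  · obtain ⟨Φ, hΦ, hne⟩ := hne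
    exact absurd (hT Φ hΦ) hne
  · exact hT

end Transforms

/-- **Corollary 1**: a transform of `GX_ℂ` which is an involution, whose fixed point set is
exactly `GY_ℂ`, and which is induced by a holomorphic map `F : ℂ^{2n+1} → ℂ^{2n+1}`,
must be the complex Legendre involution. -/
theorem complex_legendre_involution_characterization (n : ℕ) (hn : 1 ≤ n)
    (T : CTripleMap n → CTripleMap n)
    (hmap : ∀ Φ ∈ CGXset n, T Φ ∈ CGXset n)
    (hinv : ∀ Φ ∈ CGXset n, T (T Φ) = Φ)
    (hfix : ∀ Φ ∈ CGXset n, (Φ ∈ CGYset n → T Φ = Φ) ∧ (Φ ∉ CGYset n → T Φ ≠ Φ))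
    (F : (Fin n → ℂ) × ℂ × (Fin n → ℂ) → (Fin n → ℂ) × ℂ × (Fin n → ℂ))
    (hF : Differentiable ℂ F)
    (hTF : ∀ Φ ∈ CGXset n, cPackTriple n (T Φ) = F ∘ cPackTriple n Φ) :
    ∀ Φ ∈ CGXset n, T Φ = CLegendre n Φ :=
  complex_legendre_involution_characterization_general n hn T hmap hinv (fun Φ hΦ => (hfix Φ hΦ).1)
    ((exists_mem_CGXset_notMem_CGYset hn).imp fun Φ h => ⟨h.1, (hfix Φ h.1).2 h.2⟩) F hF hTF
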